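/- For each even integer m with 4 ≤ m ≤ 4t, the number of irreducible codewords of weight m in C_b equals (1/m)·∏_{i=0}^{m/2−1} (2t − i)². -/

import Mathlib

open Finset Matrix

/-- Column index set of the base matrix `H_b`: all binary vectors of length `4t`
of Hamming weight two whose two nonzero positions differ by an odd number. -/
def colIdx (t : ℕ) := {p : Fin (4*t) × Fin (4*t) // p.1 < p.2 ∧ Odd (p.2.val - p.1.val)}

instance (t : ℕ) : Fintype (colIdx t) := by unfold colIdx; infer_instance

instance (t : ℕ) : DecidableEq (colIdx t) := by unfold colIdx; infer_instance

/-- The base matrix `H_b` of the FDPC construction. -/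
def Hb (t : ℕ) : Matrix (Fin (4*t)) (colIdx t) (ZMod 2) :=
  fun r c => if r = c.1.1 ∨ r = c.1.2 then 1 else 0

/-- Hamming weight of a vector. -/
def wt {ι : Type*} [Fintype ι] (x : ι → ZMod 2) : ℕ :=
  (Finset.univ.filter fun i => x i ≠ 0).card

/-- A codeword of `C_b = ker H_b` is *irreducible* if it is nonzero and cannot be
written as the sum of two nonzero codewords with disjoint supports (equivalently,
the subgraph of the Tanner graph induced by its support is a single cycle). -/
def Irred (t : ℕ) (x : colIdx t → ZMod 2) : Prop :=
  Hb t *ᵥ x = 0 ∧ x ≠ 0 ∧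
  ¬ ∃ a b : colIdx t → ZMod 2, Hb t *ᵥ a = 0 ∧ Hb t *ᵥ b = 0 ∧ a ≠ 0 ∧ b ≠ 0 ∧
      (∀ c, a c = 0 ∨ b c = 0) ∧ x = a + b

/-!
The columns of `Hb t` are the edges of the complete bipartite graph between the even and the odd
elements of `Fin (4 * t)`, and `Hb t` is its incidence matrix. Codewords are therefore the subgraphs
with all degrees even, and the irreducible ones are the minimal nonempty such subgraphs. These are
exactly the cycles: a nonempty graph without leaves is not a forest, so it contains a cycle, and a
nonempty proper subgraph of a cycle has a vertex of degree one.

The cycles of length `2 * k` are counted through the embeddings of `cycleGraph (2 * k)`. Each cycle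
is the image of `2 * (2 * k)` embeddings, since an embedding onto a given cycle is determined by the
oriented edge to which it sends the edge from `0` to `1`, and every choice occurs. On the other
hand, an embedding into the complete bipartite graph amounts to a choice of the side that receives
the even vertices together with an injection on each of the two parity classes.
-/

open SimpleGraph

section CycleSpace

variable {V W : Type*} {G : SimpleGraph V}

/-- Membership in the binary cycle space: the edge set has even degree at every vertex. The degree
is an `ncard`, so vertices of infinite degree count as even. -/
def HasEvenDegrees (G : SimpleGraph V) : Prop :=
  ∀ v, Even (G.neighborSet v).ncard

/-- A circuit of the cycle space: a minimal nonempty edge set with all degrees even. On a finite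
vertex set these are the cycles, see `isElementaryCycle_iff_exists_cycleGraph_map_eq`. -/
def IsElementaryCycle (G : SimpleGraph V) : Prop :=
  Minimal (fun H : SimpleGraph V ↦ H ≠ ⊥ ∧ HasEvenDegrees H) G

theorem hasEvenDegrees_map_iff (f : V ↪ W) : HasEvenDegrees (G.map f) ↔ HasEvenDegrees G := by
  have hcard (v : V) : ((G.map f).neighborSet (f v)).ncard = (G.neighborSet v).ncard := by
    rw [neighborSet_map, Set.ncard_image_of_injective _ f.injective]
  refine ⟨fun h v ↦ hcard v ▸ h (f v), fun h w ↦ ?_⟩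
  by_cases hw : ∃ v, f v = w
  · obtain ⟨v, rfl⟩ := hw
    exact hcard v ▸ h v
  · have hempty : (G.map f).neighborSet w = ∅ := by
      ext u
      simp only [mem_neighborSet, map_adj, Set.mem_empty_iff_false, iff_false]
      rintro ⟨v, -, -, hv, -⟩
      exact hw ⟨v, hv⟩
    simp [hempty]

theorem exists_map_eq_of_le_map {H : SimpleGraph W} {f : V ↪ W} (h : H ≤ G.map f) :
    ∃ K ≤ G, K.map f = H := by
  refine ⟨H.comap f, fun u v huv ↦ map_adj_apply.1 (h huv), ?_⟩
  refine le_antisymm (map_comap_le f H) fun u v huv ↦ ?_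
  obtain ⟨u', v', -, rfl, rfl⟩ := (map_adj f G u v).1 (h huv)
  exact map_adj_apply.2 huv

theorem IsElementaryCycle.map (hG : IsElementaryCycle G) (f : V ↪ W) :
    IsElementaryCycle (G.map f) := by
  have hbot (K : SimpleGraph V) : K.map f ≠ ⊥ ↔ K ≠ ⊥ := by
    rw [not_iff_not, ← le_bot_iff, map_le_iff_le_comap, comap_bot, le_bot_iff]
  refine ⟨⟨(hbot G).2 hG.1.1, (hasEvenDegrees_map_iff f).2 hG.1.2⟩, ?_⟩
  rintro H ⟨hne, heven⟩ hle
  obtain ⟨K, hKG, rfl⟩ := exists_map_eq_of_le_map hle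
  exact map_monotone f (hG.2 ⟨(hbot K).1 hne, (hasEvenDegrees_map_iff f).1 heven⟩ hKG)

theorem preconnected_induction (hG : G.Preconnected) {P : V → Prop} {u : V} (hu : P u)
    (hadj : ∀ v w, G.Adj v w → P v → P w) (v : V) : P v := by
  obtain ⟨p⟩ := hG u v
  induction p with
  | nil => exact hu
  | cons h _ ih => exact ih (hadj _ _ h hu)

theorem isElementaryCycle_of_isCycles (hconn : G.Preconnected) (hcyc : G.IsCycles) (hne : G ≠ ⊥) :
    IsElementaryCycle G := by
  refine ⟨⟨hne, fun v ↦ ?_⟩, ?_⟩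
  · rcases (G.neighborSet v).eq_empty_or_nonempty with h | h
    · simp [h]
    · simp [hcyc h]
  rintro H ⟨hHne, hHeven⟩ hle
  have full {v : V} (hv : (H.neighborSet v).Nonempty) : H.neighborSet v = G.neighborSet v := by
    have htwo := hcyc (hv.mono (neighborSet_mono hle v))
    have hfin : (G.neighborSet v).Finite := Set.finite_of_ncard_ne_zero (by lia)
    have hpos := (Set.ncard_pos (hfin.subset (neighborSet_mono hle v))).2 hv
    refine Set.eq_of_subset_of_ncard_le (neighborSet_mono hle v) ?_ hfin
    obtain ⟨r, hr⟩ := hHeven v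
    lia
  obtain ⟨u, w, huw⟩ := ne_bot_iff_exists_adj.1 hHne
  have hall : ∀ v, (H.neighborSet v).Nonempty :=
    preconnected_induction hconn ⟨w, huw⟩ fun v v' hvv' hv ↦
      ⟨v, ((full hv).ge hvv').symm⟩
  exact fun v v' hvv' ↦ (full (hall v)).ge hvv'

theorem exists_ncard_neighborSet_eq_one [Finite G.edgeSet] (hG : G.IsAcyclic) (hne : G ≠ ⊥) :
    ∃ v, (G.neighborSet v).ncard = 1 := by
  obtain ⟨a, b, hab⟩ := ne_bot_iff_exists_adj.1 hne
  have : Nonempty V := ⟨a⟩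
  obtain ⟨u, v, p, hp, hmax⟩ := Walk.exists_isPath_forall_isPath_length_le_length G
  have hnil : ¬p.Nil := Walk.not_nil_iff_lt_length.2 (hmax a b _ (Walk.IsPath.of_adj hab))
  refine ⟨u, Set.ncard_eq_one.2 ⟨p.snd, Set.eq_singleton_iff_unique_mem.2
    ⟨p.adj_snd hnil, fun w hw ↦ hG.eq_snd_of_adj_start hp hw ?_⟩⟩⟩
  by_contra hwp
  exact absurd (hmax _ _ _ (hp.cons (h := Adj.symm hw) hwp)) (by simp)

theorem exists_cycleGraph_map_le [Finite V] (heven : HasEvenDegrees G) (hne : G ≠ ⊥) :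
    ∃ n, 3 ≤ n ∧ ∃ f : Fin n ↪ V, (cycleGraph n).map f ≤ G := by
  have hcyc : ¬G.IsAcyclic := fun h ↦ by
    obtain ⟨v, hv⟩ := exists_ncard_neighborSet_eq_one h hne
    exact absurd (heven v) (by simp [hv])
  simp only [isAcyclic_iff_free_cycleGraph, not_forall, Free, not_not] at hcyc
  obtain ⟨n, hn, ⟨f⟩⟩ := hcyc
  exact ⟨n, hn, f.toEmbedding, (map_le_iff_le_comap ..).2 f.toHom.le_comap⟩

end CycleSpace

section CycleGraph

variable {V W : Type*} {G : SimpleGraph V} {n : ℕ}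

theorem isCycles_cycleGraph (n : ℕ) : (cycleGraph (n + 3)).IsCycles := fun v _ ↦ by
  rw [← Nat.card_coe_set_eq, Nat.card_eq_fintype_card, card_neighborSet_eq_degree,
    cycleGraph_degree_three_le]

theorem ncard_edgeSet_cycleGraph (hn : 3 ≤ n) : (cycleGraph n).edgeSet.ncard = n := by
  obtain ⟨n, rfl⟩ := Nat.exists_eq_add_of_le' hn
  have := sum_degrees_eq_twice_card_edges (cycleGraph (n + 3))
  simp only [cycleGraph_degree_three_le, sum_const, card_univ, Fintype.card_fin,
    smul_eq_mul] at this
  rw [← coe_edgeFinset, Set.ncard_coe_finset]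
  lia

theorem isElementaryCycle_cycleGraph (hn : 3 ≤ n) : IsElementaryCycle (cycleGraph n) := by
  have hne : cycleGraph n ≠ ⊥ := fun h ↦ by
    have hcard := ncard_edgeSet_cycleGraph hn
    rw [h, edgeSet_bot, Set.ncard_empty] at hcard
    lia
  obtain ⟨n, rfl⟩ := Nat.exists_eq_add_of_le' hn
  exact isElementaryCycle_of_isCycles cycleGraph_preconnected (isCycles_cycleGraph n) hne

theorem isElementaryCycle_iff_exists_cycleGraph_map_eq [Finite V] :
    IsElementaryCycle G ↔ ∃ n, 3 ≤ n ∧ ∃ f : Fin n ↪ V, (cycleGraph n).map f = G := by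
  constructor
  · intro hG
    obtain ⟨n, hn, f, hf⟩ := exists_cycleGraph_map_le hG.1.2 hG.1.1
    exact ⟨n, hn, f, hG.eq_of_le ((isElementaryCycle_cycleGraph hn).map f).1 hf⟩
  · rintro ⟨n, hn, f, rfl⟩
    exact (isElementaryCycle_cycleGraph hn).map f

theorem eq_of_isCycles_map_eq_map (hconn : G.Preconnected) (hcyc : G.IsCycles) {f g : V ↪ W}
    (hfg : G.map f = G.map g) {a b : V} (hab : G.Adj a b) (ha : f a = g a) (hb : f b = g b) :
    f = g := by
  have other {v w : V} (hvw : G.Adj v w) (hv : f v = g v) (hw : f w = g w) (x : V)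
      (hx : G.Adj v x) : f x = g x := by
    obtain ⟨y, -, hy⟩ := hcyc.existsUnique_ne_adj hvw
    by_cases hxw : x = w
    · exact hxw ▸ hw
    have hfx : (G.map g).Adj (g v) (f x) := hv ▸ hfg ▸ map_adj_apply.2 hx
    obtain ⟨v', z, hz, hv', hzx⟩ := (map_adj g G _ _).1 hfx
    obtain rfl := g.injective hv'
    have hzw : z ≠ w := by
      rintro rfl
      exact hxw (f.injective (hzx ▸ hw).symm)
    rw [← hzx, hy z ⟨hzw.symm, hz⟩, hy x ⟨Ne.symm hxw, hx⟩]
  have hall := preconnected_induction hconn (P := fun v ↦ f v = g v ∧ ∃ w, G.Adj v w ∧ f w = g w)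
    ⟨ha, b, hab, hb⟩ fun v w hvw ⟨hv, x, hvx, hx⟩ ↦ ⟨other hvx hv hx w hvw, v, hvw.symm, hv⟩
  ext v
  exact (hall v).1

theorem exists_cycleGraph_iso {i j : Fin (n + 3)} (hij : (cycleGraph (n + 3)).Adj i j) :
    ∃ σ : cycleGraph (n + 3) ≃g cycleGraph (n + 3), σ 0 = i ∧ σ 1 = j := by
  rcases cycleGraph_adj.1 hij with h | h
  · refine ⟨⟨Equiv.subLeft i, ?_⟩, ?_, ?_⟩
    · intro a b
      simp [cycleGraph_adj, or_comm]
    · simp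
    · simp [← h]
  · refine ⟨⟨Equiv.addLeft i, ?_⟩, ?_, ?_⟩
    · intro a b
      simp [cycleGraph_adj]
    · simp
    · simp [← h]

theorem ncard_edgeSet_map (f : V ↪ W) : (G.map f).edgeSet.ncard = G.edgeSet.ncard := by
  rw [edgeSet_map, Set.ncard_image_of_injective _ f.sym2Map.injective]

theorem card_dart_eq_two_mul_ncard_edgeSet [Finite V] :
    Nat.card G.Dart = 2 * G.edgeSet.ncard := by
  classical
  have := Fintype.ofFinite V
  rw [Nat.card_eq_fintype_card, dart_card_eq_twice_card_edges, ← coe_edgeFinset,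
    Set.ncard_coe_finset]

theorem map_iso_trans {U : Type*} {H : SimpleGraph U} (σ : G ≃g H) (f : U ↪ W) :
    G.map (σ.toEquiv.toEmbedding.trans f) = H.map f := by
  have hσ : G.map σ = H := by
    ext u v
    rw [← σ.apply_symm_apply u, ← σ.apply_symm_apply v]
    exact (map_adj_apply (f := σ.toEquiv.toEmbedding)).trans σ.map_adj_iff.symm
  exact (SimpleGraph.map_map G σ f).symm.trans (congrArg (SimpleGraph.map f) hσ)

theorem card_cycleGraph_map_eq [Finite V] (hG : IsElementaryCycle G)
    (hcard : G.edgeSet.ncard = n) :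
    Nat.card {f : Fin n ↪ V // (cycleGraph n).map f = G} = 2 * n := by
  obtain ⟨m, hm, f₀, rfl⟩ := isElementaryCycle_iff_exists_cycleGraph_map_eq.1 hG
  obtain rfl : m = n := by rw [← hcard, ncard_edgeSet_map, ncard_edgeSet_cycleGraph hm]
  suffices Nat.card {f : Fin m ↪ V // (cycleGraph m).map f = (cycleGraph m).map f₀} =
      Nat.card ((cycleGraph m).map f₀).Dart by
    rw [this, card_dart_eq_two_mul_ncard_edgeSet, hcard]
  obtain ⟨m, rfl⟩ := Nat.exists_eq_add_of_le' hm
  have h01 : (cycleGraph (m + 3)).Adj 0 1 := cycleGraph_adj.2 (.inr (sub_zero 1))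
  refine Nat.card_eq_of_bijective (fun f ↦ ⟨(f.1 0, f.1 1), f.2.le (map_adj_apply.2 h01)⟩) ⟨?_, ?_⟩
  · rintro ⟨f, hf⟩ ⟨g, hg⟩ hfg
    obtain ⟨h0, h1⟩ : f 0 = g 0 ∧ f 1 = g 1 := by simpa [Dart.ext_iff] using hfg
    exact Subtype.ext (eq_of_isCycles_map_eq_map cycleGraph_preconnected (isCycles_cycleGraph m)
      (hf.trans hg.symm) h01 h0 h1)
  · rintro ⟨⟨a, b⟩, hab⟩
    obtain ⟨i, j, hij, rfl, rfl⟩ := (map_adj ..).1 hab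
    obtain ⟨σ, rfl, rfl⟩ := exists_cycleGraph_iso hij
    exact ⟨⟨_, map_iso_trans σ f₀⟩, rfl⟩

theorem card_cycleGraph_map_le [Finite V] (hn : 3 ≤ n) (G : SimpleGraph V) :
    Nat.card {f : Fin n ↪ V // (cycleGraph n).map f ≤ G} =
      2 * n * {H | IsElementaryCycle H ∧ H ≤ G ∧ H.edgeSet.ncard = n}.ncard := by
  classical
  have := Fintype.ofFinite V
  let S := {H | IsElementaryCycle H ∧ H ≤ G ∧ H.edgeSet.ncard = n}
  have map_mem (f : Fin n ↪ V) (hf : (cycleGraph n).map f ≤ G) : (cycleGraph n).map f ∈ S :=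
    ⟨(isElementaryCycle_cycleGraph hn).map f, hf,
      (ncard_edgeSet_map f).trans (ncard_edgeSet_cycleGraph hn)⟩
  let fiberEquiv : {f : Fin n ↪ V // (cycleGraph n).map f ≤ G} ≃
      Σ H : S, {f : Fin n ↪ V // (cycleGraph n).map f = H} :=
    { toFun f := ⟨⟨_, map_mem f.1 f.2⟩, f.1, rfl⟩
      invFun p := ⟨p.2.1, p.2.2.trans_le p.1.2.2.1⟩
      left_inv _ := rfl
      right_inv := by rintro ⟨⟨_, _⟩, _, h⟩; cases h; rfl }
  rw [Nat.card_congr fiberEquiv, Nat.card_sigma, sum_congr rfl fun H _ ↦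
    card_cycleGraph_map_eq H.2.1 H.2.2.2, sum_const, card_univ, smul_eq_mul, mul_comm,
    ← Nat.card_eq_fintype_card, Nat.card_coe_set_eq]

end CycleGraph

section BipartiteEmbedding

variable {V ι κ : Type*} {A : SimpleGraph ι}

/-- A color-preserving embedding is a family of embeddings between the color classes. -/
def embeddingCompEqEquiv (c : V → κ) (d : ι → κ) :
    {f : ι ↪ V // ∀ i, c (f i) = d i} ≃ ∀ b : κ, {i // d i = b} ↪ {v // c v = b} where
  toFun f b := ⟨fun i ↦ ⟨f.1 i, (f.2 i).trans i.2⟩, fun i j hij ↦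
    Subtype.ext (f.1.injective (congrArg Subtype.val hij))⟩
  invFun g := by
    refine ⟨⟨fun i ↦ g (d i) ⟨i, rfl⟩, fun i j hij ↦ ?_⟩, fun i ↦ (g (d i) ⟨i, rfl⟩).2⟩
    have inj {b b' : κ} (p : {i // d i = b}) (q : {i // d i = b'})
        (hpq : (g b p : V) = g b' q) : (p : ι) = q := by
      obtain rfl : b = b' := by rw [← (g b p).2, hpq, (g b' q).2]
      exact congrArg Subtype.val ((g b).injective (Subtype.ext hpq))
    exact inj _ _ hij
  left_inv _ := rfl
  right_inv g := by ext b ⟨i, rfl⟩; rfl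

theorem card_embedding_comp_eq [Finite V] [Finite ι] [Fintype κ] (c : V → κ) (d : ι → κ) :
    Nat.card {f : ι ↪ V // ∀ i, c (f i) = d i} =
      ∏ b, (Nat.card {v // c v = b}).descFactorial (Nat.card {i // d i = b}) := by
  classical
  have := Fintype.ofFinite V
  have := Fintype.ofFinite ι
  rw [Nat.card_congr (embeddingCompEqEquiv c d), Nat.card_pi]
  refine prod_congr rfl fun b _ ↦ ?_
  simp only [Nat.card_eq_fintype_card, Fintype.card_embedding_eq]

theorem map_le_comap_top_iff (hA : A.Preconnected) (d : A.Coloring Bool) (c : V → Bool)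
    (f : ι ↪ V) :
    A.map f ≤ (⊤ : SimpleGraph Bool).comap c ↔ ∃ s, ∀ i, c (f i) = (d i ^^ s) := by
  rw [map_le_iff_le_comap]
  constructor
  · intro h
    rcases isEmpty_or_nonempty ι with hι | ⟨⟨i₀⟩⟩
    · exact ⟨false, hι.elim⟩
    refine ⟨d i₀ ^^ c (f i₀), preconnected_induction hA (u := i₀) (by simp) fun i j hij hi ↦ ?_⟩
    have hc : c (f j) = !c (f i) := Bool.eq_not.2 (Ne.symm (h hij))
    have hd : d j = !d i := Bool.eq_not.2 (d.valid hij).symm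
    rw [hc, hi, hd, Bool.not_xor]
  · rintro ⟨s, hs⟩ i j hij
    simpa [hs] using d.valid hij

theorem card_map_le_comap_top_of_balanced [Finite V] [Finite ι] [Nonempty ι] (hA : A.Preconnected)
    {d : A.Coloring Bool} {c : V → Bool} {N k : ℕ} (hc : ∀ b, Nat.card {v // c v = b} = N)
    (hd : ∀ b, Nat.card {i // d i = b} = k) :
    Nat.card {f : ι ↪ V // A.map f ≤ (⊤ : SimpleGraph Bool).comap c} =
      2 * N.descFactorial k ^ 2 := by
  have card_fiber (s : Bool) :
      Nat.card {f : ι ↪ V // ∀ i, c (f i) = (d i ^^ s)} = N.descFactorial k ^ 2 := by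
    have hds (b : Bool) : Nat.card {i // (d i ^^ s) = b} = k := by
      have untwist (i : ι) : (d i ^^ s) = b ↔ d i = (b ^^ s) := by cases s <;> simp
      simp only [untwist, hd]
    rw [card_embedding_comp_eq]
    simp only [hc, hds, prod_const, card_univ, Fintype.card_bool]
  have twist : Function.Bijective fun p : Σ s, {f : ι ↪ V // ∀ i, c (f i) = (d i ^^ s)} ↦
      (⟨p.2, (map_le_comap_top_iff hA d c p.2).2 ⟨p.1, p.2.2⟩⟩ :
        {f : ι ↪ V // A.map f ≤ (⊤ : SimpleGraph Bool).comap c}) := by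
    refine ⟨?_, fun ⟨f, hf⟩ ↦ ?_⟩
    · rintro ⟨s, f, hs⟩ ⟨s', f', hs'⟩ h
      obtain rfl : f = f' := congrArg Subtype.val h
      obtain ⟨i⟩ := ‹Nonempty ι›
      obtain rfl := Bool.xor_right_inj.1 ((hs i).symm.trans (hs' i))
      rfl
    · obtain ⟨s, hs⟩ := (map_le_comap_top_iff hA d c f).1 hf
      exact ⟨⟨s, f, hs⟩, rfl⟩
  rw [← Nat.card_eq_of_bijective _ twist, Nat.card_sigma, sum_congr rfl fun s _ ↦ card_fiber s,
    sum_const, card_univ, Fintype.card_bool, smul_eq_mul]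

end BipartiteEmbedding

section ParityGraph

/-- The parity of an index, with `true` for even indices as in `cycleGraph.bicoloring_of_even`. -/
def parityColor (n : ℕ) (i : Fin n) : Bool := decide (i.val % 2 = 0)

theorem card_parityColor_eq (k : ℕ) (b : Bool) :
    Nat.card {i : Fin (2 * k) // parityColor (2 * k) i = b} = k := by
  let e : {i : Fin (2 * k) // parityColor (2 * k) i = b} ≃ Fin k :=
    { toFun i := ⟨i.1 / 2, by lia⟩
      invFun j := ⟨⟨2 * j + (!b).toNat, by have := (!b).toNat_lt; lia⟩, by
        cases b <;> simp [parityColor]⟩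
      left_inv := by
        rintro ⟨i, rfl⟩
        rcases Nat.mod_two_eq_zero_or_one i with h | h
        all_goals
          ext
          simp only [parityColor, h, decide_true, decide_false, Bool.not_true, Bool.not_false,
            Bool.toNat_true, Bool.toNat_false, one_ne_zero]
          lia
      right_inv j := by
        have := (!b).toNat_lt
        ext
        change (2 * j.val + (!b).toNat) / 2 = j
        lia }
  rw [Nat.card_congr e, Nat.card_eq_fintype_card, Fintype.card_fin]

end ParityGraph

section SupportGraph

theorem zmod_two_eq_ite (a : ZMod 2) : a = if a ≠ 0 then 1 else 0 := by
  decide +revert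

theorem zmod_two_eq_of_support_eq {C : Type*} {x y : C → ZMod 2}
    (h : Function.support x = Function.support y) :
    x = y := by
  ext c
  have hc : x c ≠ 0 ↔ y c ≠ 0 := Set.ext_iff.1 h c
  rw [zmod_two_eq_ite (x c), zmod_two_eq_ite (y c)]
  simp only [hc]

variable {V C : Type*} {G : SimpleGraph V}

/-- The subgraph of `G` formed by the edges on which the vector `x` is nonzero, for an indexing
`ends` of the edges of `G` by the coordinates of `x`. -/
def supportGraph (ends : C ≃ G.edgeSet) (x : C → ZMod 2) : SimpleGraph V :=
  fromEdgeSet ((fun c ↦ (ends c : Sym2 V)) '' Function.support x)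

variable (ends : C ≃ G.edgeSet) {x y : C → ZMod 2}

theorem edgeSet_supportGraph :
    (supportGraph ends x).edgeSet = (fun c ↦ (ends c : Sym2 V)) '' Function.support x := by
  rw [supportGraph, edgeSet_fromEdgeSet, sdiff_eq_left, Set.disjoint_left]
  rintro _ ⟨c, -, rfl⟩
  exact G.not_isDiag_of_mem_edgeSet (ends c).2

theorem coe_ends_injective : Function.Injective fun c ↦ (ends c : Sym2 V) :=
  Subtype.val_injective.comp ends.injective

theorem supportGraph_le_supportGraph :
    supportGraph ends x ≤ supportGraph ends y ↔ Function.support x ⊆ Function.support y := by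
  rw [← edgeSet_subset_edgeSet, edgeSet_supportGraph, edgeSet_supportGraph,
    Set.image_subset_image_iff (coe_ends_injective ends)]

theorem supportGraph_injective : Function.Injective (supportGraph ends) := fun _ _ h ↦
  zmod_two_eq_of_support_eq (((supportGraph_le_supportGraph ends).1 h.le).antisymm
    ((supportGraph_le_supportGraph ends).1 h.ge))

theorem supportGraph_zero : supportGraph ends 0 = ⊥ := by
  simp [supportGraph]

theorem supportGraph_le : supportGraph ends x ≤ G := by
  rw [← edgeSet_subset_edgeSet, edgeSet_supportGraph]
  rintro _ ⟨c, -, rfl⟩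
  exact (ends c).2

theorem exists_supportGraph_eq {H : SimpleGraph V} (hH : H ≤ G) : ∃ x, supportGraph ends x = H := by
  classical
  refine ⟨fun c ↦ if (ends c : Sym2 V) ∈ H.edgeSet then 1 else 0, edgeSet_inj.1 ?_⟩
  rw [edgeSet_supportGraph]
  ext e
  refine ⟨?_, fun he ↦ ?_⟩
  · rintro ⟨c, hc, rfl⟩
    simpa using hc
  · exact ⟨ends.symm ⟨e, edgeSet_mono hH he⟩, by simpa using he, by simp⟩

theorem ncard_edgeSet_supportGraph [Fintype C] : (supportGraph ends x).edgeSet.ncard = wt x := by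
  rw [edgeSet_supportGraph, Set.ncard_image_of_injective _ (coe_ends_injective ends), wt,
    ← Set.ncard_coe_finset]
  simp [Function.support]

theorem incMatrix_mulVec_apply [Fintype C] [DecidableEq V] [DecidableRel G.Adj] (v : V) :
    ((G.incMatrix (ZMod 2)).submatrix id (fun c ↦ (ends c : Sym2 V)) *ᵥ x) v =
      ((supportGraph ends x).neighborSet v).ncard := by
  have incidenceSet_eq : (supportGraph ends x).incidenceSet v =
      (fun c ↦ (ends c : Sym2 V)) '' {c | (ends c : Sym2 V) ∈ G.incidenceSet v ∧ x c ≠ 0} := by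
    ext e
    rw [incidenceSet, edgeSet_supportGraph]
    constructor
    · rintro ⟨⟨c, hc, rfl⟩, hv⟩
      exact ⟨c, ⟨⟨(ends c).2, hv⟩, hc⟩, rfl⟩
    · rintro ⟨c, ⟨⟨-, hv⟩, hc⟩, rfl⟩
      exact ⟨⟨c, hc, rfl⟩, hv⟩
  have mul_eq_ite (c : C) : G.incMatrix (ZMod 2) v (ends c) * x c =
      if (ends c : Sym2 V) ∈ G.incidenceSet v ∧ x c ≠ 0 then 1 else 0 := by
    rw [incMatrix_apply', ite_mul, one_mul, zero_mul, ite_and, ← zmod_two_eq_ite]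
  classical
  rw [← Nat.card_coe_set_eq, ← Nat.card_congr (incidenceSetEquivNeighborSet _ v),
    Nat.card_coe_set_eq, incidenceSet_eq, Set.ncard_image_of_injective _ (coe_ends_injective ends),
    mulVec, dotProduct]
  simp only [submatrix_apply, id, mul_eq_ite, sum_boole]
  rw [← Set.ncard_coe_finset, coe_filter_univ]

theorem incMatrix_mulVec_eq_zero_iff [Fintype C] [DecidableEq V] [DecidableRel G.Adj] :
    (G.incMatrix (ZMod 2)).submatrix id (fun c ↦ (ends c : Sym2 V)) *ᵥ x = 0 ↔
      HasEvenDegrees (supportGraph ends x) := by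
  simp only [funext_iff, incMatrix_mulVec_apply, Pi.zero_apply, ZMod.natCast_eq_zero_iff_even,
    HasEvenDegrees]

theorem isElementaryCycle_supportGraph_iff :
    IsElementaryCycle (supportGraph ends x) ↔
      HasEvenDegrees (supportGraph ends x) ∧ x ≠ 0 ∧
        ∀ y, HasEvenDegrees (supportGraph ends y) → y ≠ 0 →
          Function.support y ⊆ Function.support x → y = x := by
  have hbot (y : C → ZMod 2) : supportGraph ends y ≠ ⊥ ↔ y ≠ 0 := by
    rw [← supportGraph_zero ends, (supportGraph_injective ends).ne_iff]
  rw [IsElementaryCycle, minimal_iff, hbot, and_comm (a := x ≠ 0), and_assoc]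
  refine and_congr_right fun _ ↦ and_congr_right fun _ ↦ ⟨fun h y hy hy0 hyx ↦ ?_, ?_⟩
  · exact (supportGraph_injective ends (h ⟨(hbot y).2 hy0, hy⟩
      ((supportGraph_le_supportGraph ends).2 hyx))).symm
  · rintro h H ⟨hH0, hH⟩ hle
    obtain ⟨y, rfl⟩ := exists_supportGraph_eq ends (hle.trans (supportGraph_le ends))
    rw [h y hH ((hbot y).1 hH0) ((supportGraph_le_supportGraph ends).1 hle)]

end SupportGraph

section Codewords

/-- The complete bipartite graph between the even and the odd indices; for `n = 4 * t` its edges are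
the columns of `Hb t`. -/
abbrev parityGraph (n : ℕ) : SimpleGraph (Fin n) := (⊤ : SimpleGraph Bool).comap (parityColor n)

theorem parityGraph_adj_iff_of_lt {n : ℕ} {i j : Fin n} (h : i < j) :
    (parityGraph n).Adj i j ↔ Odd (j.val - i.val) := by
  simp only [comap_adj, top_adj, parityColor, ne_eq, decide_eq_decide, Nat.odd_iff]
  lia

/-- The column of `Hb t` with nonzero entries in rows `i < j` corresponds to the edge `s(i, j)`. -/
noncomputable def columnEquiv (t : ℕ) : colIdx t ≃ (parityGraph (4 * t)).edgeSet :=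
  Equiv.ofBijective
    (fun c ↦ ⟨s(c.1.1, c.1.2), (parityGraph_adj_iff_of_lt c.2.1).2 c.2.2⟩) <| by
    constructor
    · rintro ⟨⟨i, j⟩, hij, _⟩ ⟨⟨i', j'⟩, hij', _⟩ h
      rcases Sym2.eq_iff.1 (congrArg Subtype.val h) with ⟨rfl, rfl⟩ | ⟨rfl, rfl⟩
      · rfl
      · exact absurd hij hij'.asymm
    · rintro ⟨e, he⟩
      induction e with | _ i j
      have hadj : (parityGraph (4 * t)).Adj i j := he
      rcases lt_or_gt_of_ne hadj.ne with hij | hji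
      · exact ⟨⟨(i, j), hij, (parityGraph_adj_iff_of_lt hij).1 hadj⟩, rfl⟩
      · exact ⟨⟨(j, i), hji, (parityGraph_adj_iff_of_lt hji).1 hadj.symm⟩,
          Subtype.ext Sym2.eq_swap⟩

variable {t : ℕ} {x : colIdx t → ZMod 2}

theorem Hb_eq_submatrix_incMatrix : Hb t =
    ((parityGraph (4 * t)).incMatrix (ZMod 2)).submatrix id
      (fun c ↦ (columnEquiv t c : Sym2 (Fin (4 * t)))) := by
  ext r c
  have mem_incidenceSet : (columnEquiv t c : Sym2 (Fin (4 * t))) ∈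
      (parityGraph (4 * t)).incidenceSet r ↔ r = c.1.1 ∨ r = c.1.2 :=
    (and_iff_right (columnEquiv t c).2).trans Sym2.mem_iff
  simp only [Hb, submatrix_apply, id, incMatrix_apply', mem_incidenceSet]

theorem Hb_mulVec_eq_zero_iff :
    Hb t *ᵥ x = 0 ↔ HasEvenDegrees (supportGraph (columnEquiv t) x) := by
  rw [Hb_eq_submatrix_incMatrix, incMatrix_mulVec_eq_zero_iff]

theorem irred_iff_forall_support_subset :
    Irred t x ↔ Hb t *ᵥ x = 0 ∧ x ≠ 0 ∧ ∀ y, Hb t *ᵥ y = 0 → y ≠ 0 →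
      Function.support y ⊆ Function.support x → y = x := by
  refine and_congr_right fun hx ↦ and_congr_right fun _ ↦ ⟨fun h y hy hy0 hyx ↦ ?_, ?_⟩
  · by_contra hne
    refine h ⟨y, x - y, hy, ?_, hy0, sub_ne_zero.2 (Ne.symm hne), fun c ↦ ?_,
      (add_sub_cancel ..).symm⟩
    · rw [mulVec_sub, hx, hy, sub_zero]
    · refine or_iff_not_imp_left.2 fun hyc ↦ ?_
      have hxc : x c ≠ 0 := hyx hyc
      rw [Pi.sub_apply, zmod_two_eq_ite (x c), zmod_two_eq_ite (y c), if_pos hxc, if_pos hyc,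
        sub_self]
  · rintro h ⟨a, b, ha, -, ha0, hb0, hab, rfl⟩
    refine hb0 (left_eq_add.1 (h a ha ha0 fun c hc ↦ ?_))
    simpa [(hab c).resolve_left hc] using hc

theorem irred_iff_isElementaryCycle :
    Irred t x ↔ IsElementaryCycle (supportGraph (columnEquiv t) x) := by
  simp only [irred_iff_forall_support_subset, isElementaryCycle_supportGraph_iff,
    Hb_mulVec_eq_zero_iff]

theorem ncard_irred_eq_ncard_isElementaryCycle (t m : ℕ) :
    {x : colIdx t → ZMod 2 | Irred t x ∧ wt x = m}.ncard =
      {H | IsElementaryCycle H ∧ H ≤ parityGraph (4 * t) ∧ H.edgeSet.ncard = m}.ncard := by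
  rw [← Set.ncard_image_of_injective _ (supportGraph_injective (columnEquiv t))]
  congr 1
  ext H
  constructor
  · rintro ⟨x, ⟨hx, hm⟩, rfl⟩
    exact ⟨irred_iff_isElementaryCycle.1 hx, supportGraph_le _,
      (ncard_edgeSet_supportGraph _).trans hm⟩
  · rintro ⟨hH, hle, hm⟩
    obtain ⟨x, rfl⟩ := exists_supportGraph_eq (columnEquiv t) hle
    exact ⟨x, ⟨irred_iff_isElementaryCycle.2 hH, (ncard_edgeSet_supportGraph _).symm.trans hm⟩, rfl⟩

theorem card_cycleGraph_map_le_parityGraph {k : ℕ} (hk : 0 < k) (N : ℕ) :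
    Nat.card {f : Fin (2 * k) ↪ Fin (2 * N) // (cycleGraph (2 * k)).map f ≤ parityGraph (2 * N)} =
      2 * N.descFactorial k ^ 2 := by
  have : NeZero k := ⟨hk.ne'⟩
  exact card_map_le_comap_top_of_balanced cycleGraph_preconnected
    (d := cycleGraph.bicoloring_of_even _ (even_two_mul k)) (card_parityColor_eq N)
    (card_parityColor_eq k)

theorem two_mul_mul_ncard_irred {k : ℕ} (hk : 2 ≤ k) (t : ℕ) :
    2 * k * {x : colIdx t → ZMod 2 | Irred t x ∧ wt x = 2 * k}.ncard =
      (2 * t).descFactorial k ^ 2 := by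
  have h := card_cycleGraph_map_le (n := 2 * k) (by lia) (parityGraph (4 * t))
  have ht : 4 * t = 2 * (2 * t) := by ring
  rw [← ncard_irred_eq_ncard_isElementaryCycle, ht,
    card_cycleGraph_map_le_parityGraph (by lia)] at h
  lia

end Codewords

theorem stmt_9_general (t m : ℕ) (hm : Even m) (hm4 : 4 ≤ m) :
    m ∣ (∏ i ∈ Finset.range (m / 2), (2 * t - i) ^ 2) ∧
    Set.ncard {x : colIdx t → ZMod 2 | Irred t x ∧ wt x = m} =
      (∏ i ∈ Finset.range (m / 2), (2 * t - i) ^ 2) / m := by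
  obtain ⟨k, rfl⟩ := even_iff_exists_two_mul.1 hm
  have hcount := two_mul_mul_ncard_irred (k := k) (by lia) t
  rw [Nat.mul_div_cancel_left k two_pos, Finset.prod_pow, ← Nat.descFactorial_eq_prod_range,
    ← hcount]
  exact ⟨dvd_mul_right _ _, (Nat.mul_div_cancel_left _ (by lia)).symm⟩

/-- For each even `m` with `4 ≤ m ≤ 4t`, the number of irreducible codewords of
weight `m` in `C_b` equals `(1/m)·∏_{i=0}^{m/2−1} (2t − i)²`. -/
theorem stmt_9 (t : ℕ) (ht : 2 ≤ t) (m : ℕ) (hm : Even m) (hm4 : 4 ≤ m) (hmt : m ≤ 4 * t) :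
    m ∣ (∏ i ∈ Finset.range (m / 2), (2 * t - i) ^ 2) ∧
    Set.ncard {x : colIdx t → ZMod 2 | Irred t x ∧ wt x = m} =
      (∏ i ∈ Finset.range (m / 2), (2 * t - i) ^ 2) / m :=
  stmt_9_general t m hm hm4
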